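/- For each m ≥ 1 let (Y_i)_{i≥1} and (Y′_{j,m})_{j≥1} be real random variables on a common probability space and let g_m: ℝ² → ℝ be measurable. Let γ ∈ [0, 1/2), let ρ: (0,∞) → (0,∞) be continuous with finite limits lim_{t→0+} t^γ ρ(t) < ∞ and lim_{t→∞} t ρ(t) < ∞, let (l_m) satisfy l_m/m → 0, and define the weight w(m,k) = m^{−1/2} ρ(k/m) for k > l_m and w(m,k) = 0 for k ≤ l_m. Suppose there are constants u(m) ≥ 0 with u(m) (log m)² / m^{2−2γ} → 0 such that E[ | Σ_{i=1}^{m} Σ_{j=k₁}^{k₂} g_m(Y_i, Y′_{j,m}) |² ] ≤ u(m)(k₂ − k₁ + 1) for all integers 1 ≤ k₁ ≤ k₂. Then sup_{k ≥ 1} w(m,k) · max_{0 ≤ l ≤ k} | (1/m) Σ_{i=1}^{m} Σ_{j=l+1}^{k} g_m(Y_i, Y′_{j,m}) | converges to 0 in probability as m → ∞. -/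

import Mathlib

open MeasureTheory ProbabilityTheory Filter Set

/-!
Telescoping `S k - S 0` along the binary expansion of `k` and applying Cauchy–Schwarz over the
`n + 1` scales gives the Rademacher–Menshov maximal inequality: if `E ‖S (a + d) - S a‖² ≤ d U`,
then `E max_{k ≤ 2ⁿ} ‖S k - S 0‖² ≤ (n + 1)² 2ⁿ U`. A weight bounded by `A` and by `A m / k` halves
from one dyadic shell of indices beyond `m` to the next, so Chebyshev's inequality on these shells
gives a convergent series, and the weighted supremum exceeds `ε` with probability at most a
constant times `m A² (log m)² U / ε²`. The regularity of `ρ` supplies `A = C m ^ (γ - 3/2)`, for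
which `m A² = C² / m ^ (2 - 2γ)`; with `U = u m` this is exactly the assumed rate.
-/

open scoped ENNReal

section DyadicChaining

variable {E : Type*} [SeminormedAddCommGroup E]

lemma enorm_sum_sq_le_card_mul_sum_sq {ι : Type*} (s : Finset ι) (x : ι → E) :
    ‖∑ i ∈ s, x i‖ₑ ^ 2 ≤ s.card * ∑ i ∈ s, ‖x i‖ₑ ^ 2 := by
  have h : ‖∑ i ∈ s, x i‖₊ ^ 2 ≤ s.card * ∑ i ∈ s, ‖x i‖₊ ^ 2 :=
    (pow_le_pow_left' (nnnorm_sum_le s x) 2).trans sq_sum_le_card_mul_sum_sq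
  simp only [enorm_eq_nnnorm]
  exact_mod_cast h

/-- The sum of the squared increments of `S` over all dyadic blocks
`[b * 2 ^ i, (b + 1) * 2 ^ i] ⊆ [0, 2 ^ n]`, of all scales `i ≤ n`. It controls every
`S k - S 0` with `k ≤ 2 ^ n` at the cost of a factor `n + 1`. -/
noncomputable def dyadicSqVariation (S : ℕ → E) (n : ℕ) : ℝ≥0∞ :=
  ∑ i ∈ Finset.range (n + 1), ∑ b ∈ Finset.range (2 ^ (n - i)),
    ‖S (b * 2 ^ i + 2 ^ i) - S (b * 2 ^ i)‖ₑ ^ 2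

lemma sub_zero_eq_sum_dyadic_increments (S : ℕ → E) {n k : ℕ} (hk : k ≤ 2 ^ n) :
    S k - S 0 = ∑ i ∈ Finset.range (n + 1),
      (S (k / 2 ^ i * 2 ^ i) - S (k / 2 ^ (i + 1) * 2 ^ (i + 1))) := by
  have hzero : k / 2 ^ (n + 1) = 0 :=
    Nat.div_eq_of_lt (hk.trans_lt (Nat.pow_lt_pow_succ one_lt_two))
  rw [Finset.sum_range_sub' (fun i => S (k / 2 ^ i * 2 ^ i)), hzero, pow_zero, Nat.div_one,
    mul_one, zero_mul]

-- Passing from scale `i` to scale `i + 1` moves the rounded index only if `k / 2 ^ i` is odd,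
-- and then by exactly one block of scale `i`.
lemma enorm_dyadic_increment_sq_le (S : ℕ → E) {n k i : ℕ} (hk : k ≤ 2 ^ n) (hi : i ≤ n) :
    ‖S (k / 2 ^ i * 2 ^ i) - S (k / 2 ^ (i + 1) * 2 ^ (i + 1))‖ₑ ^ 2 ≤
      ∑ b ∈ Finset.range (2 ^ (n - i)), ‖S (b * 2 ^ i + 2 ^ i) - S (b * 2 ^ i)‖ₑ ^ 2 := by
  have hle : k / 2 ^ i ≤ 2 ^ (n - i) :=
    Nat.div_le_of_le_mul (by rwa [← pow_add, Nat.add_sub_cancel' hi])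
  rw [pow_succ 2 i, ← Nat.div_div_eq_div_mul]
  obtain ⟨e, he | he⟩ := Nat.even_or_odd' (k / 2 ^ i)
  · have hround : k / 2 ^ i / 2 * (2 ^ i * 2) = k / 2 ^ i * 2 ^ i := by
      rw [he, Nat.mul_div_cancel_left e two_pos]; ring
    simp [hround, enorm_eq_nnnorm]
  · have hround : k / 2 ^ i / 2 * (2 ^ i * 2) = 2 * e * 2 ^ i := by
      rw [show k / 2 ^ i / 2 = e by omega]; ring
    rw [hround, he, add_one_mul]
    exact Finset.single_le_sum (f := fun b => ‖S (b * 2 ^ i + 2 ^ i) - S (b * 2 ^ i)‖ₑ ^ 2)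
      (fun _ _ => zero_le) (Finset.mem_range.2 (by omega))

lemma enorm_sub_zero_sq_le_dyadicSqVariation (S : ℕ → E) {n k : ℕ} (hk : k ≤ 2 ^ n) :
    ‖S k - S 0‖ₑ ^ 2 ≤ (n + 1) * dyadicSqVariation S n := by
  rw [sub_zero_eq_sum_dyadic_increments S hk]
  refine (enorm_sum_sq_le_card_mul_sum_sq _ _).trans ?_
  rw [Finset.card_range, Nat.cast_add_one]
  gcongr
  exact Finset.sum_le_sum fun i hi =>
    enorm_dyadic_increment_sq_le S hk (Nat.lt_succ_iff.1 (Finset.mem_range.1 hi))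

end DyadicChaining

section MaximalInequality

variable {Ω E : Type*} [MeasurableSpace Ω] {P : Measure Ω} [SeminormedAddCommGroup E]
  {S : ℕ → Ω → E} {U : ℝ≥0∞}

lemma lintegral_dyadicSqVariation_le (hS : ∀ k, AEStronglyMeasurable (S k) P)
    (hU : ∀ a d, ∫⁻ ω, ‖S (a + d) ω - S a ω‖ₑ ^ 2 ∂P ≤ d * U) (n : ℕ) :
    ∫⁻ ω, dyadicSqVariation (S · ω) n ∂P ≤ (n + 1) * 2 ^ n * U := by
  have hmeas (a b : ℕ) : AEMeasurable (fun ω => ‖S a ω - S b ω‖ₑ ^ 2) P :=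
    ((hS a).sub (hS b)).enorm.pow_const 2
  have hscale : ∀ i ∈ Finset.range (n + 1), ∑ b ∈ Finset.range (2 ^ (n - i)),
      ∫⁻ ω, ‖S (b * 2 ^ i + 2 ^ i) ω - S (b * 2 ^ i) ω‖ₑ ^ 2 ∂P ≤ 2 ^ n * U := by
    intro i hi
    have hi : i ≤ n := Nat.lt_succ_iff.1 (Finset.mem_range.1 hi)
    calc _ ≤ ∑ _b ∈ Finset.range (2 ^ (n - i)), ((2 ^ i : ℕ) : ℝ≥0∞) * U :=
          Finset.sum_le_sum fun b _ => hU _ _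
      _ = 2 ^ n * U := by
          rw [Finset.sum_const, Finset.card_range, nsmul_eq_mul, ← mul_assoc, ← Nat.cast_mul,
            ← pow_add, Nat.sub_add_cancel hi]
          push_cast
          rfl
  calc ∫⁻ ω, dyadicSqVariation (S · ω) n ∂P
      = ∑ i ∈ Finset.range (n + 1), ∑ b ∈ Finset.range (2 ^ (n - i)),
          ∫⁻ ω, ‖S (b * 2 ^ i + 2 ^ i) ω - S (b * 2 ^ i) ω‖ₑ ^ 2 ∂P := by
        unfold dyadicSqVariation
        rw [lintegral_finsetSum' _ fun i _ => Finset.aemeasurable_fun_sum _ fun b _ => hmeas _ _]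
        exact Finset.sum_congr rfl fun i _ => lintegral_finsetSum' _ fun b _ => hmeas _ _
    _ ≤ ∑ _i ∈ Finset.range (n + 1), 2 ^ n * U := Finset.sum_le_sum hscale
    _ = (n + 1) * 2 ^ n * U := by
        rw [Finset.sum_const, Finset.card_range, nsmul_eq_mul, mul_assoc, Nat.cast_add_one]

theorem lintegral_iSup_enorm_sub_zero_sq_le (hS : ∀ k, AEStronglyMeasurable (S k) P)
    (hU : ∀ a d, ∫⁻ ω, ‖S (a + d) ω - S a ω‖ₑ ^ 2 ∂P ≤ d * U) (n : ℕ) :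
    ∫⁻ ω, ⨆ k ≤ 2 ^ n, ‖S k ω - S 0 ω‖ₑ ^ 2 ∂P ≤ (n + 1) ^ 2 * 2 ^ n * U := by
  calc ∫⁻ ω, ⨆ k ≤ 2 ^ n, ‖S k ω - S 0 ω‖ₑ ^ 2 ∂P
      ≤ ∫⁻ ω, (n + 1) * dyadicSqVariation (S · ω) n ∂P :=
        lintegral_mono fun ω => iSup₂_le fun k hk =>
          enorm_sub_zero_sq_le_dyadicSqVariation (S · ω) hk
    _ = (n + 1) * ∫⁻ ω, dyadicSqVariation (S · ω) n ∂P :=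
        lintegral_const_mul' _ _ (by finiteness)
    _ ≤ (n + 1) * ((n + 1) * 2 ^ n * U) := by
        gcongr
        exact lintegral_dyadicSqVariation_le hS hU n
    _ = (n + 1) ^ 2 * 2 ^ n * U := by ring

theorem measure_exists_norm_sub_gt_le (hS : ∀ k, AEStronglyMeasurable (S k) P)
    (hU : ∀ a d, ∫⁻ ω, ‖S (a + d) ω - S a ω‖ₑ ^ 2 ∂P ≤ d * U) (n : ℕ) {c : ℝ} (hc : 0 < c) :
    P {ω | ∃ k ≤ 2 ^ n, ∃ l ≤ 2 ^ n, c < ‖S k ω - S l ω‖} ≤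
      ENNReal.ofReal (4 * (n + 1) ^ 2 * 2 ^ n / c ^ 2) * U := by
  set M : Ω → ℝ≥0∞ := fun ω => ⨆ k ≤ 2 ^ n, ‖S k ω - S 0 ω‖ₑ ^ 2
  have hM : AEMeasurable M P := .iSup fun k => .iSup fun _ =>
    ((hS k).sub (hS 0)).enorm.pow_const 2
  have hsubset : {ω | ∃ k ≤ 2 ^ n, ∃ l ≤ 2 ^ n, c < ‖S k ω - S l ω‖} ⊆
      {ω | ENNReal.ofReal ((c / 2) ^ 2) ≤ M ω} := by
    rintro ω ⟨k, hk, l, hl, hkl⟩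
    have hlarge : ∃ j ≤ 2 ^ n, c / 2 ≤ ‖S j ω - S 0 ω‖ := by
      by_contra! hsmall
      have htri := norm_sub_le_norm_sub_add_norm_sub (S k ω) (S 0 ω) (S l ω)
      rw [norm_sub_rev (S 0 ω)] at htri
      linarith [hsmall k hk, hsmall l hl]
    obtain ⟨j, hj, hcj⟩ := hlarge
    calc ENNReal.ofReal ((c / 2) ^ 2) ≤ ‖S j ω - S 0 ω‖ₑ ^ 2 := by
          rw [ENNReal.ofReal_pow (by positivity), ← ofReal_norm]
          gcongr
      _ ≤ M ω := le_iSup₂ (f := fun k (_ : k ≤ 2 ^ n) => ‖S k ω - S 0 ω‖ₑ ^ 2) j hj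
  have hc2 : 0 < (c / 2) ^ 2 := by positivity
  calc _ ≤ P {ω | ENNReal.ofReal ((c / 2) ^ 2) ≤ M ω} := measure_mono hsubset
    _ ≤ (∫⁻ ω, M ω ∂P) / ENNReal.ofReal ((c / 2) ^ 2) :=
        meas_ge_le_lintegral_div hM (ENNReal.ofReal_pos.2 hc2).ne' ENNReal.ofReal_ne_top
    _ ≤ (n + 1) ^ 2 * 2 ^ n * U / ENNReal.ofReal ((c / 2) ^ 2) := by
        gcongr
        exact lintegral_iSup_enorm_sub_zero_sq_le hS hU n
    _ = ENNReal.ofReal ((n + 1) ^ 2 * 2 ^ n / (c / 2) ^ 2) * U := by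
        rw [ENNReal.ofReal_div_of_pos hc2, ENNReal.mul_div_right_comm]
        congr 2
        rw [ENNReal.ofReal_mul (by positivity), ENNReal.ofReal_pow (by positivity),
          ENNReal.ofReal_pow (by positivity), ENNReal.ofReal_add (by positivity) zero_le_one,
          ENNReal.ofReal_natCast, ENNReal.ofReal_one, ENNReal.ofReal_ofNat]
    _ = ENNReal.ofReal (4 * (n + 1) ^ 2 * 2 ^ n / c ^ 2) * U := by
        congr 2
        field_simp
        norm_num

end MaximalInequality

section WeightedMaximalInequality

/-- The factor lost by summing the maximal inequality over the dyadic shells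
`2 ^ (q + r - 1) < k ≤ 2 ^ (q + r)`, on which a weight decaying like `1 / k` gains `2 ^ (-r)`. -/
noncomputable def peelingConstant : ℝ := ∑' r : ℕ, ((r : ℝ) + 1) ^ 2 * (1 / 2) ^ r

lemma summable_peelingConstant : Summable fun r : ℕ => ((r : ℝ) + 1) ^ 2 * (1 / 2 : ℝ) ^ r := by
  have hsq : Summable fun r : ℕ => (r : ℝ) ^ 2 * (1 / 2 : ℝ) ^ r :=
    summable_pow_mul_geometric_of_norm_lt_one 2 (by norm_num)
  refine (((summable_nat_add_iff 1).2 hsq).mul_left 2).congr fun r => ?_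
  push_cast
  ring

lemma peelingConstant_nonneg : 0 ≤ peelingConstant := tsum_nonneg fun _ => by positivity

lemma exists_dyadic_shell (q k : ℕ) :
    ∃ r, k ≤ 2 ^ (q + r) ∧ (r = 0 ∨ 2 ^ (q + r) < 2 * k) := by
  refine ⟨Nat.clog 2 k - q, (Nat.le_pow_clog one_lt_two k).trans
    (Nat.pow_le_pow_right two_pos (by omega)), ?_⟩
  obtain hle | hlt := le_or_gt (Nat.clog 2 k) q
  · exact .inl (Nat.sub_eq_zero_of_le hle)
  · have hk : 1 < k := by
      by_contra! hk
      rw [Nat.clog_of_right_le_one hk] at hlt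
      exact Nat.not_lt_zero q hlt
    have hpred := Nat.pow_pred_clog_lt_self one_lt_two hk
    right
    calc 2 ^ (q + (Nat.clog 2 k - q)) = 2 * 2 ^ (Nat.clog 2 k).pred := by
          rw [Nat.pred_eq_sub_one, ← pow_succ', Nat.sub_add_cancel (by omega),
            Nat.add_sub_cancel' hlt.le]
      _ < 2 * k := by gcongr

lemma weight_le_on_dyadic_shell {x A : ℝ} (hA : 0 ≤ A) {q r k : ℕ} (hk : 1 ≤ k)
    (hr : r = 0 ∨ 2 ^ (q + r) < 2 * k) (hx : x ≤ A) (hxk : x * k ≤ A * 2 ^ q) :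
    x * 2 ^ r ≤ 2 * A := by
  obtain rfl | hr := hr
  · linarith
  · have hk0 : (0 : ℝ) < k := by exact_mod_cast hk
    have hr : (2 : ℝ) ^ q * 2 ^ r ≤ 2 * k := by rw [← pow_add]; exact_mod_cast hr.le
    refine le_of_mul_le_mul_right ?_ hk0
    calc x * 2 ^ r * k = x * k * 2 ^ r := by ring
      _ ≤ A * 2 ^ q * 2 ^ r := by gcongr
      _ = A * (2 ^ q * 2 ^ r) := by ring
      _ ≤ A * (2 * k) := by gcongr
      _ = 2 * A * k := by ring

variable {Ω E : Type*} [MeasurableSpace Ω] {P : Measure Ω} [SeminormedAddCommGroup E]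
  {S : ℕ → Ω → E} {U : ℝ≥0∞}

theorem measure_exists_weighted_gt_le_of_dyadic (hS : ∀ k, AEStronglyMeasurable (S k) P)
    (hU : ∀ a d, ∫⁻ ω, ‖S (a + d) ω - S a ω‖ₑ ^ 2 ∂P ≤ d * U) {v : ℕ → ℝ} {A : ℝ} (hA : 0 < A)
    {q : ℕ} (hv : ∀ k, 1 ≤ k → v k ≤ A) (hvk : ∀ k, 1 ≤ k → v k * k ≤ A * 2 ^ q)
    {ε : ℝ} (hε : 0 < ε) :
    P {ω | ∃ k, 1 ≤ k ∧ ∃ l ≤ k, ε < v k * ‖S k ω - S l ω‖} ≤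
      ENNReal.ofReal (peelingConstant * (16 * ((q + 1) ^ 2 * 2 ^ q * A ^ 2 / ε ^ 2))) * U := by
  set shell : ℕ → Set Ω := fun r =>
    {ω | ∃ k ≤ 2 ^ (q + r), ∃ l ≤ 2 ^ (q + r), ε * 2 ^ r / (2 * A) < ‖S k ω - S l ω‖}
  have hsubset : {ω | ∃ k, 1 ≤ k ∧ ∃ l ≤ k, ε < v k * ‖S k ω - S l ω‖} ⊆ ⋃ r, shell r := by
    rintro ω ⟨k, hk, l, hl, hkl⟩
    obtain ⟨r, hkr, hr⟩ := exists_dyadic_shell q k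
    refine mem_iUnion.2 ⟨r, k, hkr, l, hl.trans hkr, ?_⟩
    rw [div_lt_iff₀ (by positivity)]
    calc ε * 2 ^ r < v k * ‖S k ω - S l ω‖ * 2 ^ r := by gcongr
      _ = v k * 2 ^ r * ‖S k ω - S l ω‖ := by ring
      _ ≤ 2 * A * ‖S k ω - S l ω‖ := mul_le_mul_of_nonneg_right
          (weight_le_on_dyadic_shell hA.le hk hr (hv k hk) (hvk k hk)) (norm_nonneg _)
      _ = ‖S k ω - S l ω‖ * (2 * A) := mul_comm _ _
  set D : ℝ := 16 * ((q + 1) ^ 2 * 2 ^ q * A ^ 2 / ε ^ 2)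
  have hshell (r : ℕ) :
      P (shell r) ≤ ENNReal.ofReal (((r : ℝ) + 1) ^ 2 * (1 / 2) ^ r * D) * U := by
    refine (measure_exists_norm_sub_gt_le hS hU (q + r) (by positivity)).trans ?_
    have hqr : ((q + r : ℕ) : ℝ) + 1 ≤ (r + 1) * (q + 1) := by
      push_cast
      nlinarith [mul_nonneg q.cast_nonneg (α := ℝ) r.cast_nonneg]
    gcongr
    calc 4 * (((q + r : ℕ) : ℝ) + 1) ^ 2 * 2 ^ (q + r) / (ε * 2 ^ r / (2 * A)) ^ 2
        ≤ 4 * ((r + 1) * (q + 1)) ^ 2 * 2 ^ (q + r) / (ε * 2 ^ r / (2 * A)) ^ 2 := by gcongr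
      _ = ((r : ℝ) + 1) ^ 2 * (1 / 2) ^ r * D := by
          simp only [D, one_div, inv_pow, pow_add]
          field_simp
          norm_num
  calc _ ≤ P (⋃ r, shell r) := measure_mono hsubset
    _ ≤ ∑' r, P (shell r) := measure_iUnion_le _
    _ ≤ ∑' r : ℕ, ENNReal.ofReal (((r : ℝ) + 1) ^ 2 * (1 / 2) ^ r * D) * U :=
        ENNReal.tsum_le_tsum hshell
    _ = ENNReal.ofReal (peelingConstant * D) * U := by
        rw [ENNReal.tsum_mul_right, peelingConstant, ← tsum_mul_right,
          ENNReal.ofReal_tsum_of_nonneg (fun r => by positivity)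
            (summable_peelingConstant.mul_right D)]

lemma natLog_two_add_two_le {m : ℕ} (hm : 2 ≤ m) : (Nat.log 2 m : ℝ) + 2 ≤ 6 * Real.log m := by
  have hlog2 : 1 / 2 < Real.log 2 := by linarith [Real.log_two_gt_d9]
  have hlogm : Real.log 2 ≤ Real.log m := Real.log_le_log two_pos (by exact_mod_cast hm)
  have hfloor : Nat.log 2 m * Real.log 2 ≤ Real.log m := by
    rw [← le_div_iff₀ (by positivity)]
    exact_mod_cast Real.natLog_le_logb m 2
  nlinarith [(Nat.log 2 m).cast_nonneg (α := ℝ)]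

theorem measure_exists_weighted_gt_le (hS : ∀ k, AEStronglyMeasurable (S k) P)
    (hU : ∀ a d, ∫⁻ ω, ‖S (a + d) ω - S a ω‖ₑ ^ 2 ∂P ≤ d * U) {v : ℕ → ℝ} {A : ℝ} (hA : 0 < A)
    {m : ℕ} (hm : 2 ≤ m) (hv : ∀ k, 1 ≤ k → v k ≤ A) (hvk : ∀ k, 1 ≤ k → v k * k ≤ A * m)
    {ε : ℝ} (hε : 0 < ε) :
    P {ω | ∃ k, 1 ≤ k ∧ ∃ l ≤ k, ε < v k * ‖S k ω - S l ω‖} ≤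
      ENNReal.ofReal (1152 * peelingConstant * (m * A ^ 2 * Real.log m ^ 2 / ε ^ 2)) * U := by
  set q := Nat.log 2 m + 1 with hq
  have hmq : (m : ℝ) ≤ 2 ^ q := by exact_mod_cast (Nat.lt_pow_succ_log_self one_lt_two m).le
  have hqm : (2 : ℝ) ^ q ≤ 2 * m := by
    rw [hq, pow_succ']
    gcongr
    exact_mod_cast Nat.pow_log_le_self 2 (by omega)
  have hqlog : (q : ℝ) + 1 ≤ 6 * Real.log m := by
    rw [hq]
    push_cast
    linarith [natLog_two_add_two_le hm]
  refine (measure_exists_weighted_gt_le_of_dyadic hS hU hA hv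
    (fun k hk => (hvk k hk).trans (by gcongr)) hε).trans ?_
  have hK := peelingConstant_nonneg
  refine mul_le_mul_left (ENNReal.ofReal_le_ofReal ?_) U
  calc peelingConstant * (16 * (((q : ℝ) + 1) ^ 2 * 2 ^ q * A ^ 2 / ε ^ 2))
      ≤ peelingConstant * (16 * ((6 * Real.log m) ^ 2 * (2 * m) * A ^ 2 / ε ^ 2)) := by gcongr
    _ = 1152 * peelingConstant * (m * A ^ 2 * Real.log m ^ 2 / ε ^ 2) := by ring

end WeightedMaximalInequality

section WeightBounds

lemma bddAbove_image_Ioc_of_tendsto {α β : Type*} [LinearOrder α] [TopologicalSpace α]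
    [OrderTopology α] [CompactIccSpace α] [NoMaxOrder α] [LinearOrder β] [TopologicalSpace β]
    [OrderTopology β] {f : α → β} {a b : α} {L : β} (hf : ContinuousOn f (Ioc a b))
    (hlim : Tendsto f (nhdsWithin a (Ioi a)) (nhds L)) : BddAbove (f '' Ioc a b) := by
  have : Nonempty β := ⟨L⟩
  obtain ⟨B, hB⟩ := hlim.isBoundedUnder_le
  obtain ⟨c, hac, hc⟩ := mem_nhdsGT_iff_exists_Ioo_subset.1 (eventually_map.1 hB)
  have hnear : BddAbove (f '' Ioo a c) := ⟨B, forall_mem_image.2 hc⟩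
  have hfar : BddAbove (f '' Icc c b) :=
    isCompact_Icc.bddAbove_image (hf.mono (Icc_subset_Ioc hac le_rfl))
  refine (hnear.union hfar).mono ?_
  rw [← image_union]
  exact image_mono fun x hx => (lt_or_ge x c).imp (⟨hx.1, ·⟩) (⟨·, hx.2⟩)

lemma bddAbove_image_Ici_of_tendsto {α β : Type*} [LinearOrder α] [TopologicalSpace α]
    [CompactIccSpace α] [LinearOrder β] [TopologicalSpace β] [OrderTopology β]
    {f : α → β} {a : α} {L : β} (hf : ContinuousOn f (Ici a))
    (hlim : Tendsto f atTop (nhds L)) : BddAbove (f '' Ici a) := by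
  have : Nonempty α := ⟨a⟩
  have : Nonempty β := ⟨L⟩
  obtain ⟨B, hB⟩ := hlim.isBoundedUnder_le
  obtain ⟨c, hc⟩ := eventually_atTop.1 (eventually_map.1 hB)
  have hfar : BddAbove (f '' Ici c) := ⟨B, forall_mem_image.2 hc⟩
  have hnear : BddAbove (f '' Icc a c) :=
    isCompact_Icc.bddAbove_image (hf.mono Icc_subset_Ici_self)
  refine (hnear.union hfar).mono ?_
  rw [← image_union]
  exact image_mono fun x hx => (le_total x c).imp (⟨hx, ·⟩) id

lemma exists_weight_function_bound {γ : ℝ} (hγ : 0 ≤ γ) {ρ : ℝ → ℝ}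
    (hρ : ContinuousOn ρ (Ioi 0))
    (hzero : ∃ L, Tendsto (fun t => t ^ γ * ρ t) (nhdsWithin 0 (Ioi 0)) (nhds L))
    (htop : ∃ L, Tendsto (fun t => t * ρ t) atTop (nhds L)) :
    ∃ C, 0 < C ∧ ∀ s t, 0 < s → s ≤ 1 → s ≤ t →
      ρ t ≤ C * s ^ (-γ) ∧ ρ t * t ≤ C * s ^ (-γ) := by
  obtain ⟨L₀, hL₀⟩ := hzero
  obtain ⟨L₁, hL₁⟩ := htop
  have hcont₀ : ContinuousOn (fun t => t ^ γ * ρ t) (Ioc 0 1) :=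
    (continuousOn_id.rpow_const fun t ht => .inl ht.1.ne').mul (hρ.mono Ioc_subset_Ioi_self)
  have hcont₁ : ContinuousOn (fun t => t * ρ t) (Ici 1) :=
    continuousOn_id.mul (hρ.mono (Ici_subset_Ioi.2 one_pos))
  obtain ⟨C₀, hC₀⟩ := bddAbove_image_Ioc_of_tendsto hcont₀ hL₀
  obtain ⟨C₁, hC₁⟩ := bddAbove_image_Ici_of_tendsto hcont₁ hL₁
  rw [mem_upperBounds, forall_mem_image] at hC₀ hC₁
  set C := max 1 (max C₀ C₁)
  have hC : 0 < C := one_pos.trans_le (le_max_left _ _)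
  have hC₀C : C₀ ≤ C := (le_max_left _ _).trans (le_max_right _ _)
  have hC₁C : C₁ ≤ C := (le_max_right _ _).trans (le_max_right _ _)
  refine ⟨C, hC, fun s t hs hs1 hst => ?_⟩
  have ht : 0 < t := hs.trans_le hst
  obtain ht1 | ht1 := le_total t 1
  · have hle : ρ t ≤ C * s ^ (-γ) := calc
      ρ t = t ^ γ * ρ t * t ^ (-γ) := by
        rw [mul_right_comm, ← Real.rpow_add ht, add_neg_cancel, Real.rpow_zero, one_mul]
      _ ≤ C * s ^ (-γ) := by
        gcongr ?_ * ?_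
        · exact (hC₀ ⟨ht, ht1⟩).trans hC₀C
        · exact Real.rpow_le_rpow_of_nonpos hs hst (neg_nonpos.2 hγ)
    refine ⟨hle, ?_⟩
    calc ρ t * t ≤ C * s ^ (-γ) * t := by gcongr
      _ ≤ C * s ^ (-γ) := mul_le_of_le_one_right (by positivity) ht1
  · have hle : ρ t * t ≤ C * s ^ (-γ) := calc
      ρ t * t = t * ρ t := mul_comm _ _
      _ ≤ C := (hC₁ ht1).trans hC₁C
      _ ≤ C * s ^ (-γ) := le_mul_of_one_le_right hC.le
        (Real.one_le_rpow_of_pos_of_le_one_of_nonpos hs hs1 (neg_nonpos.2 hγ))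
    refine ⟨le_of_mul_le_mul_right ?_ ht, hle⟩
    exact hle.trans (le_mul_of_one_le_right (by positivity) ht1)

lemma exists_scaled_weight_bound {γ : ℝ} (hγ : 0 ≤ γ) {ρ : ℝ → ℝ}
    (hρ : ContinuousOn ρ (Ioi 0))
    (hzero : ∃ L, Tendsto (fun t => t ^ γ * ρ t) (nhdsWithin 0 (Ioi 0)) (nhds L))
    (htop : ∃ L, Tendsto (fun t => t * ρ t) atTop (nhds L)) :
    ∃ C, 0 < C ∧ ∀ m k : ℕ, 1 ≤ m → 1 ≤ k →
      (m : ℝ) ^ (-(1 : ℝ) / 2) * ρ (k / m) / m ≤ C * (m : ℝ) ^ (γ - 3 / 2) ∧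
      (m : ℝ) ^ (-(1 : ℝ) / 2) * ρ (k / m) / m * k ≤ C * (m : ℝ) ^ (γ - 3 / 2) * m := by
  obtain ⟨C, hC, hbound⟩ := exists_weight_function_bound hγ hρ hzero htop
  refine ⟨C, hC, fun m k hm hk => ?_⟩
  have hm1 : (1 : ℝ) ≤ m := by exact_mod_cast hm
  have hm0 : (0 : ℝ) < m := one_pos.trans_le hm1
  obtain ⟨hle, hle_mul⟩ := hbound (1 / m) (k / m) (by positivity)
    (div_le_one_of_le₀ hm1 hm0.le) (by gcongr; exact_mod_cast hk)
  have hpow : (m : ℝ) ^ (-(1 : ℝ) / 2) * (C * (1 / m) ^ (-γ)) / m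
      = C * (m : ℝ) ^ (γ - 3 / 2) := by
    rw [one_div, Real.inv_rpow hm0.le, Real.rpow_neg hm0.le γ, inv_inv,
      show γ - 3 / 2 = -1 / 2 + γ - 1 by ring, Real.rpow_sub_one hm0.ne', Real.rpow_add hm0]
    ring
  constructor
  · rw [← hpow]
    gcongr
  · calc (m : ℝ) ^ (-(1 : ℝ) / 2) * ρ (k / m) / m * k
        = (m : ℝ) ^ (-(1 : ℝ) / 2) * (ρ (k / m) * (k / m)) := by ring
      _ ≤ (m : ℝ) ^ (-(1 : ℝ) / 2) * (C * (1 / m) ^ (-γ)) := by gcongr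
      _ = C * (m : ℝ) ^ (γ - 3 / 2) * m := by
          rw [← hpow, div_mul_cancel₀ _ hm0.ne']

lemma mul_sq_rpow_sub_three_halves {m : ℝ} (hm : 0 < m) (γ : ℝ) :
    m * (m ^ (γ - 3 / 2)) ^ 2 = (m ^ (2 - 2 * γ))⁻¹ := by
  rw [← Real.rpow_natCast, ← Real.rpow_mul hm.le, ← Real.rpow_neg hm.le,
    show -(2 - 2 * γ) = (γ - 3 / 2) * (2 : ℕ) + 1 by push_cast; ring, Real.rpow_add_one hm.ne',
    mul_comm]

end WeightBounds

section Monitoring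

lemma sum_Icc_add_one_eq_sum_range_sub {E : Type*} [AddCommGroup E] (x : ℕ → E) {a b : ℕ}
    (hab : a ≤ b) : ∑ j ∈ Finset.Icc (a + 1) b, x j =
      ∑ j ∈ Finset.range (b + 1), x j - ∑ j ∈ Finset.range (a + 1), x j := by
  rw [← Finset.sum_Ico_eq_sub x (Nat.add_le_add_right hab 1), Finset.Ico_add_one_right_eq_Icc]

lemma ofReal_sq_eq_enorm_sq (x : ℝ) : ENNReal.ofReal (x ^ 2) = ‖x‖ₑ ^ 2 := by
  rw [← enorm_pow, Real.enorm_of_nonneg (sq_nonneg x)]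

variable {Ω E : Type*} [MeasurableSpace Ω] {P : Measure Ω} [SeminormedAddCommGroup E]
  [NormedSpace ℝ E]

theorem measure_exists_weighted_average_gt_le {Z : ℕ → Ω → E}
    (hZ : ∀ j, AEStronglyMeasurable (Z j) P) {U : ℝ≥0∞}
    (hU : ∀ k₁ k₂, 1 ≤ k₁ → k₁ ≤ k₂ →
      ∫⁻ ω, ‖∑ j ∈ Finset.Icc k₁ k₂, Z j ω‖ₑ ^ 2 ∂P ≤ (k₂ - k₁ + 1 : ℕ) * U)
    {v : ℕ → ℝ} {A : ℝ} (hA : 0 < A) {m : ℕ} (hm : 2 ≤ m)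
    (hv : ∀ k, 1 ≤ k → v k / m ≤ A) (hvk : ∀ k, 1 ≤ k → v k / m * k ≤ A * m)
    {ε : ℝ} (hε : 0 < ε) :
    P {ω | ∃ k, 1 ≤ k ∧ ∃ l ≤ k,
        v k * ‖(1 / (m : ℝ)) • ∑ j ∈ Finset.Icc (l + 1) k, Z j ω‖ > ε} ≤
      ENNReal.ofReal (1152 * peelingConstant * (m * A ^ 2 * Real.log m ^ 2 / ε ^ 2)) * U := by
  set S : ℕ → Ω → E := fun k ω => ∑ j ∈ Finset.range (k + 1), Z j ω
  have hS (k : ℕ) : AEStronglyMeasurable (S k) P :=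
    Finset.aestronglyMeasurable_fun_sum _ fun j _ => hZ j
  have hincr (a d : ℕ) : ∫⁻ ω, ‖S (a + d) ω - S a ω‖ₑ ^ 2 ∂P ≤ d * U := by
    obtain rfl | hd := Nat.eq_zero_or_pos d
    · simp [enorm_eq_nnnorm]
    · have hblock := hU (a + 1) (a + d) (by omega) (by omega)
      simp only [sum_Icc_add_one_eq_sum_range_sub (Z · _) (Nat.le_add_right a d)] at hblock
      rwa [show a + d - (a + 1) + 1 = d by omega] at hblock
  refine (measure_mono ?_).trans (measure_exists_weighted_gt_le hS hincr hA hm hv hvk hε)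
  rintro ω ⟨k, hk, l, hl, hkl⟩
  refine ⟨k, hk, l, hl, ?_⟩
  rw [sum_Icc_add_one_eq_sum_range_sub (Z · ω) hl, norm_smul, Real.norm_of_nonneg (by positivity),
    ← mul_assoc, mul_one_div] at hkl
  exact hkl

end Monitoring

theorem remainder_negligible_in_probability_general
    {Ω E : Type*} [MeasurableSpace Ω] (P : Measure Ω) [SeminormedAddCommGroup E]
    [NormedSpace ℝ E]
    (Z : ℕ → ℕ → Ω → E) (hZ : ∀ m j, AEStronglyMeasurable (Z m j) P)
    (γ : ℝ) (hγ0 : 0 ≤ γ)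
    (ρ : ℝ → ℝ) (hρcont : ContinuousOn ρ (Ioi 0))
    (hρzero : ∃ L : ℝ, Tendsto (fun t : ℝ => t ^ γ * ρ t) (nhdsWithin 0 (Ioi 0)) (nhds L))
    (hρtop : ∃ L : ℝ, Tendsto (fun t : ℝ => t * ρ t) atTop (nhds L))
    (l : ℕ → ℕ) (w : ℕ → ℕ → ℝ)
    (hw : ∀ m k : ℕ, w m k =
      if l m < k then (m : ℝ) ^ (-(1 : ℝ) / 2) * ρ ((k : ℝ) / m) else 0)
    (u : ℕ → ℝ)
    (hu : Tendsto (fun m : ℕ => u m * (Real.log m) ^ 2 / (m : ℝ) ^ (2 - 2 * γ))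
      atTop (nhds 0))
    (hbound : ∀ m k₁ k₂ : ℕ, 1 ≤ k₁ → k₁ ≤ k₂ →
      ∫⁻ ω, ‖∑ j ∈ Finset.Icc k₁ k₂, Z m j ω‖ₑ ^ 2 ∂P
        ≤ ENNReal.ofReal (u m * ((k₂ - k₁ + 1 : ℕ) : ℝ))) :
    ∀ ε : ℝ, 0 < ε →
      Tendsto (fun m : ℕ =>
        P {ω | ∃ k : ℕ, 1 ≤ k ∧ ∃ l' : ℕ, l' ≤ k ∧
          w m k * ‖(1 / (m : ℝ)) • ∑ j ∈ Finset.Icc (l' + 1) k, Z m j ω‖ > ε})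
        atTop (nhds 0) := by
  intro ε hε
  obtain ⟨C, hC, hweight⟩ := exists_scaled_weight_bound hγ0 hρcont hρzero hρtop
  set D : ℝ := 1152 * peelingConstant * C ^ 2 / ε ^ 2
  have hlim : Tendsto (fun m : ℕ => ENNReal.ofReal
      (D * (u m * (Real.log m) ^ 2 / (m : ℝ) ^ (2 - 2 * γ)))) atTop (nhds 0) := by
    simpa using ENNReal.tendsto_ofReal (hu.const_mul D)
  refine tendsto_of_tendsto_of_tendsto_of_le_of_le' tendsto_const_nhds hlim
    (.of_forall fun _ => zero_le) ?_
  filter_upwards [eventually_ge_atTop 2] with m hm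
  have hm0 : (0 : ℝ) < m := by positivity
  have hweight_m (k : ℕ) (hk : 1 ≤ k) : w m k / m ≤ C * (m : ℝ) ^ (γ - 3 / 2) ∧
      w m k / m * k ≤ C * (m : ℝ) ^ (γ - 3 / 2) * m := by
    rw [hw]
    split_ifs
    · exact hweight m k (by omega) hk
    · rw [zero_div, zero_mul]
      constructor <;> positivity
  have hmoment (k₁ k₂ : ℕ) (h₁ : 1 ≤ k₁) (h₂ : k₁ ≤ k₂) :
      ∫⁻ ω, ‖∑ j ∈ Finset.Icc k₁ k₂, Z m j ω‖ₑ ^ 2 ∂P ≤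
        (k₂ - k₁ + 1 : ℕ) * ENNReal.ofReal (u m) := by
    rw [mul_comm, ← ENNReal.ofReal_natCast, ← ENNReal.ofReal_mul' (Nat.cast_nonneg _)]
    exact hbound m k₁ k₂ h₁ h₂
  refine (measure_exists_weighted_average_gt_le (hZ m) hmoment (by positivity) hm
    (fun k hk => (hweight_m k hk).1) (fun k hk => (hweight_m k hk).2) hε).trans_eq ?_
  have hK := peelingConstant_nonneg
  rw [← ENNReal.ofReal_mul (by positivity), mul_pow, mul_left_comm (m : ℝ),
    mul_sq_rpow_sub_three_halves hm0]
  congr 1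
  ring

/-- Lemma A.1: under the weight-function regularity (Assumption 1) and the moment bound
`E[|Σ_{i=1}^m Σ_{j=k₁}^{k₂} g_m(Y_i,Y'_{j,m})|²] ≤ u(m)(k₂-k₁+1)` with
`u(m)(log m)²/m^{2-2γ} → 0`, the weighted supremum
`sup_{k≥1} w(m,k) max_{0≤l≤k} |(1/m) Σ_{i=1}^m Σ_{j=l+1}^k g_m(Y_i,Y'_{j,m})|`
converges to `0` in probability as `m → ∞`. -/
theorem remainder_negligible_in_probability
    {Ω : Type*} [MeasurableSpace Ω] (P : Measure Ω) [IsProbabilityMeasure P]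
    (Y : ℕ → Ω → ℝ) (Y' : ℕ → ℕ → Ω → ℝ) (g : ℕ → ℝ → ℝ → ℝ)
    (hYmeas : ∀ i, Measurable (Y i)) (hY'meas : ∀ m j, Measurable (Y' m j))
    (hgmeas : ∀ m, Measurable (Function.uncurry (g m)))
    (γ : ℝ) (hγ0 : 0 ≤ γ) (hγ : γ < 1 / 2)
    (ρ : ℝ → ℝ) (hρpos : ∀ t : ℝ, 0 < t → 0 < ρ t) (hρcont : ContinuousOn ρ (Ioi 0))
    (hρzero : ∃ L : ℝ, Tendsto (fun t : ℝ => t ^ γ * ρ t) (nhdsWithin 0 (Ioi 0)) (nhds L))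
    (hρtop : ∃ L : ℝ, Tendsto (fun t : ℝ => t * ρ t) atTop (nhds L))
    (l : ℕ → ℕ) (hl : Tendsto (fun m : ℕ => (l m : ℝ) / m) atTop (nhds 0))
    (w : ℕ → ℕ → ℝ)
    (hw : ∀ m k : ℕ, w m k =
      if l m < k then (m : ℝ) ^ (-(1 : ℝ) / 2) * ρ ((k : ℝ) / m) else 0)
    (u : ℕ → ℝ) (hu0 : ∀ m, 0 ≤ u m)
    (hu : Tendsto (fun m : ℕ => u m * (Real.log m) ^ 2 / (m : ℝ) ^ (2 - 2 * γ))
      atTop (nhds 0))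
    (hbound : ∀ m k₁ k₂ : ℕ, 1 ≤ k₁ → k₁ ≤ k₂ →
      (∫⁻ ω, ENNReal.ofReal ((∑ i ∈ Finset.Icc 1 m, ∑ j ∈ Finset.Icc k₁ k₂,
          g m (Y i ω) (Y' m j ω)) ^ 2) ∂P)
        ≤ ENNReal.ofReal (u m * ((k₂ - k₁ + 1 : ℕ) : ℝ))) :
    ∀ ε : ℝ, 0 < ε →
      Tendsto (fun m : ℕ =>
        P {ω | ∃ k : ℕ, 1 ≤ k ∧ ∃ l' : ℕ, l' ≤ k ∧
          w m k * |(1 / (m : ℝ)) * ∑ i ∈ Finset.Icc 1 m, ∑ j ∈ Finset.Icc (l' + 1) k,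
            g m (Y i ω) (Y' m j ω)| > ε})
        atTop (nhds 0) := by
  simp_rw [ofReal_sq_eq_enorm_sq, Finset.sum_comm (s := Finset.Icc 1 _)] at hbound ⊢
  exact remainder_negligible_in_probability_general P
    (fun m j ω => ∑ i ∈ Finset.Icc 1 m, g m (Y i ω) (Y' m j ω))
    (fun m j => (Finset.measurable_fun_sum _ fun i _ =>
      (hgmeas m).comp ((hYmeas i).prodMk (hY'meas m j))).aestronglyMeasurable)
    γ hγ0 ρ hρcont hρzero hρtop l w hw u hu hbound
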